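/- In the setting of the variance comparison lemma — i.i.d. pairs (X_n, Y_n) with Y_n | X_n = x distributed according to the probability vector p*(x) on {1, ..., L}, measurable loss g : S × {1, ..., L} → [0, 1], empirical risk R̂ = (1/N) Σ_n g(X_n, Y_n) and Bayes-distilled risk R̂* = (1/N) Σ_n Σ_y p*_y(X_n) g(X_n, y) — equality Var(R̂*) = Var(R̂) holds if and only if, for almost every x, the loss values g(x, ·) are constant on the support of p*(x); equivalently, if and only if the conditional variance Var(g(X_1, Y_1) | X_1) is almost surely zero. -/

import Mathlib

open MeasureTheory ProbabilityTheory

/-- The weighted variance is a weighted sum of squares. -/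
lemma bayes_condvar_eq {L : ℕ} (q f : Fin L → ℝ) (hs : ∑ y, q y = 1) :
    (∑ y, q y * f y ^ 2) - (∑ y, q y * f y) ^ 2
      = ∑ y, q y * (f y - ∑ z, q z * f z) ^ 2 := by
  set m := ∑ z, q z * f z with hm
  have h1 : ∀ y, q y * (f y - m) ^ 2 = q y * f y ^ 2 - 2 * m * (q y * f y) + m ^ 2 * q y := by
    intro y; ring
  simp_rw [h1, Finset.sum_add_distrib, Finset.sum_sub_distrib, ← Finset.mul_sum]
  rw [hs, ← hm]; ring

lemma bayes_condvar_zero_iff {L : ℕ} (q f : Fin L → ℝ) (h0 : ∀ y, 0 ≤ q y)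
    (hs : ∑ y, q y = 1) :
    (∑ y, q y * f y ^ 2) - (∑ y, q y * f y) ^ 2 = 0 ↔
      ∀ y y' : Fin L, 0 < q y → 0 < q y' → f y = f y' := by
  rw [bayes_condvar_eq q f hs]
  constructor
  · intro h
    rw [Finset.sum_eq_zero_iff_of_nonneg
      (fun y _ => mul_nonneg (h0 y) (sq_nonneg _))] at h
    have key : ∀ y, 0 < q y → f y = ∑ z, q z * f z := by
      intro y hy
      rcases mul_eq_zero.1 (h y (Finset.mem_univ y)) with h2 | h2
      · exact absurd h2 hy.ne'
      · exact sub_eq_zero.1 (pow_eq_zero_iff (two_ne_zero) |>.1 h2)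
    intro y y' hy hy'
    rw [key y hy, key y' hy']
  · intro h
    apply Finset.sum_eq_zero
    intro y _
    rcases (h0 y).eq_or_lt with hy | hy
    · rw [← hy, zero_mul]
    · have : ∑ z, q z * f z = f y := by
        have h3 : ∀ z ∈ Finset.univ, q z * f z = q z * f y := by
          intro z _
          rcases (h0 z).eq_or_lt with hz | hz
          · rw [← hz, zero_mul, zero_mul]
          · rw [h z y hz hy]
        rw [Finset.sum_congr rfl h3, ← Finset.sum_mul, hs, one_mul]
      rw [this]; simp

lemma bayes_p_le_one {L : ℕ} (q : Fin L → ℝ) (h0 : ∀ y, 0 ≤ q y)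
    (hs : ∑ y, q y = 1) (y : Fin L) : q y ≤ 1 := by
  rw [← hs]; exact Finset.single_le_sum (fun z _ => h0 z) (Finset.mem_univ y)

lemma bayes_avg_mem {L : ℕ} (q f : Fin L → ℝ) (h0 : ∀ y, 0 ≤ q y)
    (hs : ∑ y, q y = 1) (hf : ∀ y, f y ∈ Set.Icc (0 : ℝ) 1) :
    ∑ y, q y * f y ∈ Set.Icc (0 : ℝ) 1 := by
  refine ⟨Finset.sum_nonneg fun y _ => mul_nonneg (h0 y) (hf y).1, ?_⟩
  rw [← hs]
  exact Finset.sum_le_sum fun y _ => mul_le_of_le_one_right (h0 y) (hf y).2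

lemma bayes_p_measurable {S : Type*} [MeasurableSpace S] {L : ℕ} (p : S → Fin L → ℝ)
    (hp_meas : ∀ y, Measurable fun x => p x y) :
    Measurable fun z : S × Fin L => p z.1 z.2 :=
  measurable_from_prod_countable_left fun y => hp_meas y

lemma bayes_prob {S : Type*} [MeasurableSpace S] {L : ℕ}
    (μ : Measure S) [IsProbabilityMeasure μ] (p : S → Fin L → ℝ)
    (hp_meas : ∀ y, Measurable fun x => p x y)
    (hp_nonneg : ∀ x y, 0 ≤ p x y) (hp_sum : ∀ x, ∑ y, p x y = 1) :
    IsProbabilityMeasure ((μ.prod (Measure.count : Measure (Fin L))).withDensity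
      fun z => ENNReal.ofReal (p z.1 z.2)) := by
  constructor
  rw [withDensity_apply _ MeasurableSet.univ, Measure.restrict_univ,
    lintegral_prod _ (bayes_p_measurable p hp_meas).ennreal_ofReal.aemeasurable]
  simp_rw [lintegral_count, tsum_fintype]
  have : ∀ x, ∑ y, ENNReal.ofReal (p x y) = 1 := by
    intro x
    rw [← ENNReal.ofReal_sum_of_nonneg (fun y _ => hp_nonneg x y), hp_sum, ENNReal.ofReal_one]
  simp [this]

lemma bayes_integral {S : Type*} [MeasurableSpace S] {L : ℕ}
    (μ : Measure S) [IsProbabilityMeasure μ] (p : S → Fin L → ℝ)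
    (hp_meas : ∀ y, Measurable fun x => p x y)
    (hp_nonneg : ∀ x y, 0 ≤ p x y) (hp_sum : ∀ x, ∑ y, p x y = 1)
    (f : S × Fin L → ℝ) (hf : Measurable f) (hb : ∀ z, f z ∈ Set.Icc (0 : ℝ) 1) :
    ∫ z, f z ∂((μ.prod (Measure.count : Measure (Fin L))).withDensity
      fun z => ENNReal.ofReal (p z.1 z.2)) = ∫ x, ∑ y, p x y * f (x, y) ∂μ := by
  have hpm := bayes_p_measurable p hp_meas
  rw [integral_withDensity_eq_integral_toReal_smul hpm.ennreal_ofReal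
    (Filter.Eventually.of_forall fun _ => ENNReal.ofReal_lt_top)]
  simp_rw [ENNReal.toReal_ofReal (hp_nonneg _ _), smul_eq_mul]
  rw [integral_prod]
  · simp_rw [integral_count]
  · refine Integrable.of_bound (hpm.mul hf).aestronglyMeasurable 1
      (Filter.Eventually.of_forall fun z => ?_)
    rw [Real.norm_eq_abs, abs_of_nonneg (mul_nonneg (hp_nonneg _ _) (hb z).1)]
    exact mul_le_one₀ (bayes_p_le_one (p z.1) (hp_nonneg _) (hp_sum _) _) (hb z).1 (hb z).2

lemma bayes_variance_mean {Z : Type*} [MeasurableSpace Z] {N : ℕ}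
    (ν : Measure Z) [IsProbabilityMeasure ν] (f : Z → ℝ) (hf : MemLp f 2 ν) :
    variance (fun ω : Fin N → Z => (N : ℝ)⁻¹ * ∑ n, f (ω n)) (Measure.pi fun _ => ν)
      = (N : ℝ)⁻¹ ^ 2 * (N * variance f ν) := by
  rw [variance_const_mul]
  have h := variance_sum_pi (ι := Fin N) (μ := fun _ => ν) (X := fun _ => f) (fun _ => hf)
  have h2 : (∑ i : Fin N, fun ω : Fin N → Z => f (ω i)) = fun ω => ∑ n, f (ω n) := by
    ext ω; simp
  rw [h2] at h
  rw [h]; simp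

/-- Equality condition in Lemma 1 of the paper (from Menon et al. 2021): in the setting of
the variance comparison lemma — i.i.d. pairs `(X_n, Y_n)` with `X_n ∼ μ` and `Y_n | X_n = x`
distributed as the probability vector `p*(x)` on `Fin L` (joint law `ν` = `μ ⊗ count` with
density `(x, y) ↦ p*_y(x)`, sample law `ν^⊗N`), loss `g : S × Fin L → [0,1]` measurable,
`R̂ = (1/N) Σ_n g(X_n, Y_n)` and `R̂* = (1/N) Σ_n Σ_y p*_y(X_n) g(X_n, y)` — the variances
are equal iff for `μ`-a.e. `x` the loss values `g(x, ·)` are constant on the support of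
`p*(x)`; equivalently, iff the conditional variance
`Var(g(X₁,Y₁) | X₁ = x) = Σ_y p*_y(x) g(x,y)² − (Σ_y p*_y(x) g(x,y))²` is a.s. zero. -/
theorem variance_bayes_distilled_eq_iff
    {S : Type*} [MeasurableSpace S] {L N : ℕ} (hN : 0 < N)
    (μ : Measure S) [IsProbabilityMeasure μ]
    (p : S → Fin L → ℝ)
    (hp_meas : ∀ y, Measurable fun x => p x y)
    (hp_nonneg : ∀ x y, 0 ≤ p x y)
    (hp_sum : ∀ x, ∑ y, p x y = 1)
    (g : S × Fin L → ℝ)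
    (hg_meas : Measurable g)
    (hg_bdd : ∀ z, g z ∈ Set.Icc (0 : ℝ) 1)
    (ν : Measure (S × Fin L))
    (hν : ν = (μ.prod (Measure.count : Measure (Fin L))).withDensity
      fun z => ENNReal.ofReal (p z.1 z.2))
    (Pr : Measure (Fin N → S × Fin L))
    (hPr : Pr = Measure.pi fun _ => ν) :
    ((variance (fun ω => (N : ℝ)⁻¹ * ∑ n, ∑ y, p (ω n).1 y * g ((ω n).1, y)) Pr =
        variance (fun ω => (N : ℝ)⁻¹ * ∑ n, g (ω n)) Pr) ↔
      ∀ᵐ x ∂μ, ∀ y y' : Fin L, 0 < p x y → 0 < p x y' → g (x, y) = g (x, y')) ∧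
    ((variance (fun ω => (N : ℝ)⁻¹ * ∑ n, ∑ y, p (ω n).1 y * g ((ω n).1, y)) Pr =
        variance (fun ω => (N : ℝ)⁻¹ * ∑ n, g (ω n)) Pr) ↔
      ∀ᵐ x ∂μ, (∑ y, p x y * g (x, y) ^ 2) - (∑ y, p x y * g (x, y)) ^ 2 = 0) := by
  have hiff : ∀ x, ((∑ y, p x y * g (x, y) ^ 2) - (∑ y, p x y * g (x, y)) ^ 2 = 0 ↔
      ∀ y y' : Fin L, 0 < p x y → 0 < p x y' → g (x, y) = g (x, y')) := fun x =>
    bayes_condvar_zero_iff (p x) (fun y => g (x, y)) (hp_nonneg x) (hp_sum x)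
  suffices hmain : (variance (fun ω => (N : ℝ)⁻¹ * ∑ n, ∑ y, p (ω n).1 y * g ((ω n).1, y)) Pr =
        variance (fun ω => (N : ℝ)⁻¹ * ∑ n, g (ω n)) Pr) ↔
      ∀ᵐ x ∂μ, (∑ y, p x y * g (x, y) ^ 2) - (∑ y, p x y * g (x, y)) ^ 2 = 0 by
    refine ⟨?_, hmain⟩
    rw [hmain]
    simp_rw [hiff]
  have hνp : IsProbabilityMeasure ν := by
    rw [hν]; exact bayes_prob μ p hp_meas hp_nonneg hp_sum
  have hint : ∀ f : S × Fin L → ℝ, Measurable f → (∀ z, f z ∈ Set.Icc (0 : ℝ) 1) →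
      ∫ z, f z ∂ν = ∫ x, ∑ y, p x y * f (x, y) ∂μ := by
    rw [hν]; exact bayes_integral μ p hp_meas hp_nonneg hp_sum
  have hgx : ∀ y, Measurable fun x => g (x, y) := fun y =>
    hg_meas.comp measurable_prodMk_right
  set h : S → ℝ := fun x => ∑ y, p x y * g (x, y) with hh
  have hhm : Measurable h :=
    Finset.measurable_sum _ fun y _ => (hp_meas y).mul (hgx y)
  have hhb : ∀ x, h x ∈ Set.Icc (0 : ℝ) 1 := fun x =>
    bayes_avg_mem (p x) (fun y => g (x, y)) (hp_nonneg x) (hp_sum x) (fun y => hg_bdd _)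
  have hsq : ∀ t : ℝ, t ∈ Set.Icc (0 : ℝ) 1 → t ^ 2 ∈ Set.Icc (0 : ℝ) 1 := fun t ht =>
    ⟨sq_nonneg t, pow_le_one₀ ht.1 ht.2⟩
  set h2 : S → ℝ := fun x => ∑ y, p x y * g (x, y) ^ 2 with hh2
  have hh2m : Measurable h2 :=
    Finset.measurable_sum _ fun y _ => (hp_meas y).mul ((hgx y).pow_const 2)
  have hh2b : ∀ x, h2 x ∈ Set.Icc (0 : ℝ) 1 := fun x =>
    bayes_avg_mem (p x) (fun y => g (x, y) ^ 2) (hp_nonneg x) (hp_sum x)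
      (fun y => hsq _ (hg_bdd _))
  have hgL : MemLp g 2 ν :=
    memLp_of_bounded (Filter.Eventually.of_forall hg_bdd) hg_meas.aestronglyMeasurable 2
  have hhL : MemLp (fun z : S × Fin L => h z.1) 2 ν :=
    memLp_of_bounded (a := 0) (b := 1) (Filter.Eventually.of_forall fun z : S × Fin L => hhb z.1)
      (hhm.comp measurable_fst).aestronglyMeasurable 2
  have hconst : ∀ k : S → ℝ, (fun x => ∑ y, p x y * k x) = k := by
    intro k; funext x
    rw [← Finset.sum_mul, hp_sum, one_mul]
  have e1 : variance g ν = ∫ x, h2 x ∂μ - (∫ x, h x ∂μ) ^ 2 := by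
    rw [variance_eq_sub hgL]
    congr 1
    · exact hint (fun z => g z ^ 2) (hg_meas.pow_const 2) fun z => hsq _ (hg_bdd z)
    · rw [hint g hg_meas hg_bdd]
  have e2 : variance (fun z : S × Fin L => h z.1) ν
      = ∫ x, h x ^ 2 ∂μ - (∫ x, h x ∂μ) ^ 2 := by
    rw [variance_eq_sub hhL]
    congr 1
    · refine (hint (fun z => h z.1 ^ 2) ((hhm.comp measurable_fst).pow_const 2)
        fun z => hsq _ (hhb z.1)).trans ?_
      exact congrArg (fun k : S → ℝ => ∫ x, k x ∂μ) (hconst fun x => h x ^ 2)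
    · rw [hint (fun z : S × Fin L => h z.1) (hhm.comp measurable_fst) fun z => hhb z.1]
      exact congrArg (fun k : S → ℝ => (∫ x, k x ∂μ) ^ 2) (hconst h)
  have i1 : Integrable h2 μ :=
    memLp_one_iff_integrable.1 (memLp_of_bounded (Filter.Eventually.of_forall hh2b)
      hh2m.aestronglyMeasurable 1)
  have i2 : Integrable (fun x => h x ^ 2) μ :=
    memLp_one_iff_integrable.1 (memLp_of_bounded
      (Filter.Eventually.of_forall fun x => hsq _ (hhb x))
      (hhm.pow_const 2).aestronglyMeasurable 1)
  have hN' : (N : ℝ) ≠ 0 := by exact_mod_cast hN.ne'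
  have v1 := bayes_variance_mean (N := N) ν g hgL
  have v2 := bayes_variance_mean (N := N) ν (fun z : S × Fin L => h z.1) hhL
  have hnn : ∀ x, 0 ≤ h2 x - h x ^ 2 := by
    intro x
    have := bayes_condvar_eq (p x) (fun y => g (x, y)) (hp_sum x)
    rw [hh, hh2]
    refine this.ge.trans' ?_
    exact Finset.sum_nonneg fun y _ => mul_nonneg (hp_nonneg x y) (sq_nonneg _)
  have hz := integral_eq_zero_iff_of_nonneg (μ := μ) (f := fun x => h2 x - h x ^ 2) hnn
    (i1.sub i2)
  rw [integral_sub i1 i2] at hz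
  rw [hPr]
  change (variance (fun ω : Fin N → S × Fin L => (N : ℝ)⁻¹ * ∑ n, h (ω n).1) _ = _) ↔
    (fun x => h2 x - h x ^ 2) =ᵐ[μ] 0
  rw [v1, v2, ← hz, e1, e2]
  rw [mul_right_inj' (pow_ne_zero 2 (inv_ne_zero hN')), mul_right_inj' hN']
  constructor <;> intro hx <;> linarith
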